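/- arXiv:1508.06061 — 6 statements merged into one kernel-verified Lean document; each statement's English description precedes it below -/
import Mathlib

section
/- Let X be a real random variable whose distribution is unimodal with mode m (for some m ∈ ℝ), with mean 0 and variance 1. Then for every k ≥ √(5/3), the probability that X ≥ k is at most 4/(9(1+k²)). (One-sided Vysochanskij–Petunin inequality, large-threshold branch.) -/
open MeasureTheory

/-- A probability measure on `ℝ` is unimodal with mode `m` if it is absolutely continuous with
respect to Lebesgue measure with a density that is nondecreasing on `(-∞, m]` and nonincreasing
on `[m, ∞)`. -/
def IsUnimodalWithMode (P : Measure ℝ) (m : ℝ) : Prop :=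
  ∃ f : ℝ → ENNReal, P = volume.withDensity f ∧
    MonotoneOn f (Set.Iic m) ∧ AntitoneOn f (Set.Ici m)

/-!
A measure that is unimodal with mode `m` is a mixture of uniform distributions on intervals
containing `m`. Hence `0 ≤ ∫ g ∂P` as soon as `∫ x in A..B, g x` is nonnegative whenever
`A ≤ m ≤ B`. Applied to `g y = a y² - b + 𝟙{|y| < 1}`, with `a` and `b` chosen according to `m`,
this bounds `P {|y| < 1}` from below in terms of the second moment of `P`, which is the
Vysochanskij–Petunin inequality about the origin. An affine change of variables moves the center
to an arbitrary point `α`. As in Cantelli's inequality, the one-sided bound follows from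
`P {x ≥ μ + t} ≤ P {|x - α| ≥ μ + t - α}` with the optimal center `α = μ - σ² / t`.
-/

open Set ProbabilityTheory
open scoped ENNReal

section Superlevel

variable {α β : Type*} [LinearOrder α] {f : α → β} {m : α}

lemma ordConnected_setOf_lt_of_monotoneOn_of_antitoneOn [Preorder β]
    (hmono : MonotoneOn f (Iic m)) (hanti : AntitoneOn f (Ici m)) (t : β) :
    {x | t < f x}.OrdConnected := by
  refine ⟨fun x hx y hy z hz => ?_⟩
  rcases le_total z m with hzm | hmz
  · exact lt_of_lt_of_le hx (hmono (hz.1.trans hzm) hzm hz.1)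
  · exact lt_of_lt_of_le hy (hanti hmz (hmz.trans hz.2) hz.2)

lemma le_apply_mode_of_monotoneOn_of_antitoneOn [Preorder β]
    (hmono : MonotoneOn f (Iic m)) (hanti : AntitoneOn f (Ici m)) (x : α) : f x ≤ f m := by
  rcases le_total x m with hxm | hmx
  · exact hmono hxm self_mem_Iic hxm
  · exact hanti self_mem_Ici hmx hmx

lemma measurable_of_monotoneOn_of_antitoneOn
    [TopologicalSpace α] [OrderTopology α] [SecondCountableTopology α]
    [MeasurableSpace α] [BorelSpace α]
    [LinearOrder β] [TopologicalSpace β] [OrderTopology β] [SecondCountableTopology β]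
    [MeasurableSpace β] [BorelSpace β]
    (hmono : MonotoneOn f (Iic m)) (hanti : AntitoneOn f (Ici m)) : Measurable f :=
  measurable_of_Ioi fun t =>
    (ordConnected_setOf_lt_of_monotoneOn_of_antitoneOn hmono hanti t).measurableSet

end Superlevel

section OrdConnected

lemma ordConnected_ae_eq_Ioc_csInf_csSup {α : Type*} [ConditionallyCompleteLinearOrder α]
    [MeasurableSpace α] {μ : Measure α} [NullSingletonClass μ] {s : Set α} (hs : s.OrdConnected)
    (hne : s.Nonempty) (hbelow : BddBelow s) (habove : BddAbove s) :
    s =ᵐ[μ] Ioc (sInf s) (sSup s) := by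
  have Ioo_subset : Ioo (sInf s) (sSup s) ⊆ s := fun x hx => by
    obtain ⟨y, hy, hyx⟩ := exists_lt_of_csInf_lt hne hx.1
    obtain ⟨z, hz, hxz⟩ := exists_lt_of_lt_csSup hne hx.2
    exact hs.out hy hz ⟨hyx.le, hxz.le⟩
  exact ((subset_Icc_csInf_csSup hbelow habove).eventuallyLE.trans Ioc_ae_eq_Icc.symm.le).antisymm
    (Ioo_ae_eq_Ioc.symm.le.trans Ioo_subset.eventuallyLE)

variable {s : Set ℝ} {m : ℝ}

lemma bddAbove_of_ordConnected_of_volume_ne_top (hs : s.OrdConnected) (hm : m ∈ s)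
    (hvol : volume s ≠ ∞) : BddAbove s := by
  by_contra hunbdd
  have Ici_subset : Ici m ⊆ s := fun x hx => by
    obtain ⟨y, hy, hxy⟩ := not_bddAbove_iff.1 hunbdd x
    exact hs.out hm hy ⟨hx, hxy.le⟩
  exact hvol (measure_mono_top Ici_subset Real.volume_Ici)

lemma bddBelow_of_ordConnected_of_volume_ne_top (hs : s.OrdConnected) (hm : m ∈ s)
    (hvol : volume s ≠ ∞) : BddBelow s := by
  by_contra hunbdd
  have Iic_subset : Iic m ⊆ s := fun x hx => by
    obtain ⟨y, hy, hyx⟩ := not_bddBelow_iff.1 hunbdd x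
    exact hs.out hy hm ⟨hyx.le, hx⟩
  exact hvol (measure_mono_top Iic_subset Real.volume_Iic)

lemma exists_ae_eq_Ioc_of_ordConnected_of_volume_ne_top (hs : s.OrdConnected) (hm : m ∈ s)
    (hvol : volume s ≠ ∞) : ∃ A ≤ m, ∃ B ≥ m, s =ᵐ[volume] Ioc A B := by
  have hbelow := bddBelow_of_ordConnected_of_volume_ne_top hs hm hvol
  have habove := bddAbove_of_ordConnected_of_volume_ne_top hs hm hvol
  exact ⟨sInf s, csInf_le hbelow hm, sSup s, le_csSup habove hm,
    ordConnected_ae_eq_Ioc_csInf_csSup hs ⟨m, hm⟩ hbelow habove⟩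

end OrdConnected

section Lintegral

variable {α : Type*} [MeasurableSpace α] {μ : Measure α}

lemma lintegral_withDensity_eq_lintegral_superlevel {f h : α → ℝ≥0∞} (hf : Measurable f)
    (hf_top : ∀ᵐ x ∂μ, f x ≠ ∞) (hh : Measurable h) :
    ∫⁻ x, h x ∂μ.withDensity f
      = ∫⁻ t in Ioi (0 : ℝ), ∫⁻ x in {x | ENNReal.ofReal t < f x}, h x ∂μ := by
  have hf_top' : ∀ᵐ x ∂μ.withDensity h, f x ≠ ∞ :=
    (withDensity_absolutelyContinuous μ h).ae_le hf_top
  calc ∫⁻ x, h x ∂μ.withDensity f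
      = ∫⁻ x, f x ∂μ.withDensity h := by
        rw [lintegral_withDensity_eq_lintegral_mul _ hf hh,
          lintegral_withDensity_eq_lintegral_mul _ hh hf, mul_comm]
    _ = ∫⁻ x, ENNReal.ofReal (f x).toReal ∂μ.withDensity h :=
        lintegral_congr_ae (hf_top'.mono fun x hx => (ENNReal.ofReal_toReal hx).symm)
    _ = ∫⁻ t in Ioi (0 : ℝ), μ.withDensity h {x | t < (f x).toReal} :=
        lintegral_eq_lintegral_meas_lt _ (.of_forall fun x => ENNReal.toReal_nonneg)
          hf.ennreal_toReal.aemeasurable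
    _ = ∫⁻ t in Ioi (0 : ℝ), ∫⁻ x in {x | ENNReal.ofReal t < f x}, h x ∂μ := by
        refine setLIntegral_congr_fun measurableSet_Ioi fun t ht => ?_
        rw [← withDensity_apply _ (measurableSet_lt measurable_const hf)]
        refine measure_congr (hf_top'.mono fun x hx => propext ?_)
        exact (ENNReal.ofReal_lt_iff_lt_toReal (le_of_lt ht) hx).symm

lemma integral_nonneg_iff_lintegral_neg_le {g : α → ℝ} (hg : Integrable g μ) :
    0 ≤ ∫ x, g x ∂μ
      ↔ ∫⁻ x, ENNReal.ofReal (-g x) ∂μ ≤ ∫⁻ x, ENNReal.ofReal (g x) ∂μ := by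
  rw [integral_eq_lintegral_pos_part_sub_lintegral_neg_part hg, sub_nonneg,
    ENNReal.toReal_le_toReal (by simpa using hg.neg.lintegral_lt_top.ne) hg.lintegral_lt_top.ne]

lemma map_withDensity_comp {β : Type*} [MeasurableSpace β] {e : α → β} (he : Measurable e)
    {f : β → ℝ≥0∞} (hf : Measurable f) :
    (μ.withDensity (f ∘ e)).map e = (μ.map e).withDensity f := by
  ext s hs
  rw [Measure.map_apply he hs, withDensity_apply _ (he hs), withDensity_apply _ hs,
    setLIntegral_map hs hf he]
  rfl

end Lintegral

lemma map_sub_div_volume (α : ℝ) {r : ℝ} (hr : 0 < r) :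
    (volume : Measure ℝ).map (fun x => (x - α) / r) = ENNReal.ofReal r • volume := by
  have hcomp : (fun x : ℝ => (x - α) / r) = (· * r⁻¹) ∘ (· - α) := rfl
  rw [hcomp, ← Measure.map_map (by fun_prop) (by fun_prop),
    (measurePreserving_sub_right volume α).map_eq, Real.map_volume_mul_right (inv_ne_zero hr.ne'),
    inv_inv, abs_of_pos hr]

lemma integrable_indicator_Ioo_one (μ : Measure ℝ) [IsLocallyFiniteMeasure μ] (a b : ℝ) :
    Integrable ((Ioo a b).indicator (1 : ℝ → ℝ)) μ :=
  (integrable_indicator_iff measurableSet_Ioo).2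
    (integrableOn_const measure_Ioo_lt_top.ne)

lemma integral_sub_sq_eq_variance_add_sq {Ω : Type*} [MeasurableSpace Ω] {P : Measure Ω}
    [IsProbabilityMeasure P] {X : Ω → ℝ} (hX : MemLp X 2 P) (α : ℝ) :
    ∫ ω, (X ω - α) ^ 2 ∂P = Var[X; P] + (∫ ω, X ω ∂P - α) ^ 2 := by
  have hvar := variance_eq_sub (hX.sub (memLp_const α))
  have hmean : ∫ ω, (X ω - α) ∂P = ∫ ω, X ω ∂P - α := by
    simp [integral_sub (hX.integrable one_le_two) (integrable_const α)]
  have hshift : Var[X - fun _ => α; P] = Var[X; P] :=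
    variance_sub_const hX.aestronglyMeasurable α
  simp only [hshift, Pi.sub_apply, Pi.pow_apply, hmean] at hvar
  linarith

namespace IsUnimodalWithMode

variable {P : Measure ℝ} {m : ℝ}

theorem lintegral_le_lintegral [IsFiniteMeasure P] (hU : IsUnimodalWithMode P m)
    {g h : ℝ → ℝ≥0∞} (hg : Measurable g) (hh : Measurable h)
    (hle : ∀ A ≤ m, ∀ B ≥ m, ∫⁻ x in Ioc A B, g x ≤ ∫⁻ x in Ioc A B, h x) :
    ∫⁻ x, g x ∂P ≤ ∫⁻ x, h x ∂P := by
  obtain ⟨f, rfl, hmono, hanti⟩ := hU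
  have hf : Measurable f := measurable_of_monotoneOn_of_antitoneOn hmono hanti
  have hf_lint : ∫⁻ x, f x ≠ ∞ := by
    simpa using measure_ne_top (volume.withDensity f) univ
  have hf_top : ∀ᵐ x, f x ≠ ∞ := (ae_lt_top hf hf_lint).mono fun _ => ne_of_lt
  rw [lintegral_withDensity_eq_lintegral_superlevel hf hf_top hg,
    lintegral_withDensity_eq_lintegral_superlevel hf hf_top hh]
  refine setLIntegral_mono' measurableSet_Ioi fun t ht => ?_
  rcases eq_empty_or_nonempty {x | ENNReal.ofReal t < f x} with hempty | ⟨x, hx⟩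
  · simp [hempty]
  have hmode : m ∈ {x | ENNReal.ofReal t < f x} :=
    lt_of_lt_of_le hx (le_apply_mode_of_monotoneOn_of_antitoneOn hmono hanti x)
  have hvol : volume {x | ENNReal.ofReal t < f x} ≠ ∞ := by
    have ht_pos : ENNReal.ofReal t ≠ 0 := (ENNReal.ofReal_pos.2 ht).ne'
    refine ne_top_of_le_ne_top (ENNReal.div_ne_top hf_lint ht_pos) ?_
    exact (measure_mono fun x (hx : _ < f x) => hx.le).trans
      (meas_ge_le_lintegral_div hf.aemeasurable ht_pos ENNReal.ofReal_ne_top)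
  obtain ⟨A, hA, B, hB, hAB⟩ := exists_ae_eq_Ioc_of_ordConnected_of_volume_ne_top
    (ordConnected_setOf_lt_of_monotoneOn_of_antitoneOn hmono hanti _) hmode hvol
  rw [Measure.restrict_congr_set hAB]
  exact hle A hA B hB

theorem integral_nonneg [IsFiniteMeasure P] (hU : IsUnimodalWithMode P m) {g : ℝ → ℝ}
    (hg : Measurable g) (hg_int : Integrable g P) (hg_loc : LocallyIntegrable g volume)
    (hnonneg : ∀ A ≤ m, ∀ B ≥ m, 0 ≤ ∫ x in A..B, g x) : 0 ≤ ∫ x, g x ∂P := by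
  rw [integral_nonneg_iff_lintegral_neg_le hg_int]
  refine hU.lintegral_le_lintegral (by fun_prop) (by fun_prop) fun A hA B hB => ?_
  have hg_Ioc : IntegrableOn g (Ioc A B) :=
    (hg_loc.integrableOn_isCompact isCompact_Icc).mono_set Ioc_subset_Icc_self
  rw [← integral_nonneg_iff_lintegral_neg_le hg_Ioc,
    ← intervalIntegral.integral_of_le (hA.trans hB)]
  exact hnonneg A hA B hB

theorem map_sub_div (hU : IsUnimodalWithMode P m) (α : ℝ) {r : ℝ} (hr : 0 < r) :
    IsUnimodalWithMode (P.map fun x => (x - α) / r) ((m - α) / r) := by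
  obtain ⟨f, rfl, hmono, hanti⟩ := hU
  have hf : Measurable f := measurable_of_monotoneOn_of_antitoneOn hmono hanti
  have hinv : f = (fun y => f (r * y + α)) ∘ fun x => (x - α) / r := by
    funext x
    simp [mul_div_cancel₀ _ hr.ne']
  refine ⟨ENNReal.ofReal r • fun y => f (r * y + α), ?_, fun y hy z hz hyz => ?_,
    fun y hy z hz hyz => ?_⟩
  · conv_lhs => rw [hinv]
    rw [map_withDensity_comp (by fun_prop) (by fun_prop), map_sub_div_volume α hr,
      withDensity_smul_measure, withDensity_smul _ (by fun_prop)]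
  · rw [mem_Iic, le_div_iff₀' hr] at hy hz
    exact mul_le_mul_right (hmono (by grind) (by grind) (by gcongr)) _
  · rw [mem_Ici, div_le_iff₀' hr] at hy hz
    exact mul_le_mul_right (hanti (by grind) (by grind) (by gcongr)) _

end IsUnimodalWithMode

/-- The dual certificate for the Vysochanskij–Petunin inequality: nonnegativity of its integral
against a probability measure with second moment `s` says that the mass of `{y | 1 ≤ |y|}` is at
most `(1 - w) * (4 / 9 * s) + w * (4 / 3 * s - 1 / 3)`. The weight `w` thus interpolates between
the two branches of the inequality. -/
noncomputable def dualDensity (w y : ℝ) : ℝ :=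
  (4 + 8 * w) / 9 * y ^ 2 - (1 + w / 3) + (Ioo (-1) 1).indicator 1 y

/-- The antiderivative of `dualDensity w` that vanishes at the origin. -/
noncomputable def dualPotential (w y : ℝ) : ℝ :=
  (4 + 8 * w) / 27 * y ^ 3 - (1 + w / 3) * y + max (-1) (min y 1)

lemma measurable_dualDensity (w : ℝ) : Measurable (dualDensity w) := by
  have : Measurable ((Ioo (-1) 1).indicator (1 : ℝ → ℝ)) :=
    measurable_one.indicator measurableSet_Ioo
  unfold dualDensity
  fun_prop

lemma locallyIntegrable_dualDensity (w : ℝ) : LocallyIntegrable (dualDensity w) := by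
  have hpoly : Continuous fun y : ℝ => (4 + 8 * w) / 9 * y ^ 2 - (1 + w / 3) := by fun_prop
  exact hpoly.locallyIntegrable.add (integrable_indicator_Ioo_one volume (-1) 1).locallyIntegrable

lemma truncation_sub_le_integral_indicator {A B : ℝ} (hAB : A ≤ B) :
    max (-1) (min B 1) - max (-1) (min A 1) ≤ ∫ y in A..B, (Ioo (-1) 1).indicator 1 y := by
  rw [intervalIntegral.integral_of_le hAB, integral_indicator_one measurableSet_Ioo,
    measureReal_restrict_apply measurableSet_Ioo]
  have hsub : Ioo (max (-1) (min A 1)) (max (-1) (min B 1)) ⊆ Ioo (-1) 1 ∩ Ioc A B := by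
    intro y hy
    simp only [mem_Ioo, max_lt_iff, lt_max_iff, min_lt_iff, lt_min_iff, mem_inter_iff, mem_Ioc]
      at hy ⊢
    grind
  have hfin : volume (Ioo (-1) 1 ∩ Ioc A B) ≠ ∞ :=
    measure_ne_top_of_subset inter_subset_right measure_Ioc_lt_top.ne
  calc max (-1) (min B 1) - max (-1) (min A 1)
      ≤ volume.real (Ioo (max (-1) (min A 1)) (max (-1) (min B 1))) := by
        rw [Real.volume_real_Ioo]
        exact le_max_left _ _
    _ ≤ volume.real (Ioo (-1) 1 ∩ Ioc A B) := measureReal_mono hsub hfin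

lemma dualPotential_sub_le_integral_dualDensity (w : ℝ) {A B : ℝ} (hAB : A ≤ B) :
    dualPotential w B - dualPotential w A ≤ ∫ y in A..B, dualDensity w y := by
  have hpoly : ∫ y in A..B, ((4 + 8 * w) / 9 * y ^ 2 - (1 + w / 3))
      = (4 + 8 * w) / 27 * (B ^ 3 - A ^ 3) - (1 + w / 3) * (B - A) := by
    rw [intervalIntegral.integral_sub (Continuous.intervalIntegrable (by fun_prop) _ _)
      intervalIntegrable_const, intervalIntegral.integral_const_mul, integral_pow,
      intervalIntegral.integral_const, smul_eq_mul]
    ring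
  unfold dualDensity dualPotential
  rw [intervalIntegral.integral_add (Continuous.intervalIntegrable (by fun_prop) _ _)
    (integrable_indicator_Ioo_one volume (-1) 1).intervalIntegrable, hpoly]
  linarith [truncation_sub_le_integral_indicator hAB]

lemma dualPotential_neg (w y : ℝ) : dualPotential w (-y) = -dualPotential w y := by
  have htrunc : max (-1) (min (-y) 1) = -max (-1) (min y 1) := by grind
  unfold dualPotential
  rw [htrunc]
  ring

lemma mul_sub_one_le_sub_mul_sq {e y : ℝ} (he : e ≤ 1) (he_sq : e ^ 2 ≤ 1) (hy : 1 ≤ y) :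
    9 * (3 - 2 * e ^ 2) * (y - 1) ≤ (y - e) * (2 * y + e) ^ 2 := by
  have hdecomp : (y - e) * (2 * y + e) ^ 2 - 9 * (3 - 2 * e ^ 2) * (y - 1)
      = (1 - e ^ 2) * ((2 * y - 3) ^ 2 * (y + 3)) + e ^ 2 * (4 * (y - 1) ^ 2 * (y + 2))
        + e ^ 2 * (1 - e) := by ring
  have : 0 ≤ 1 - e := sub_nonneg.2 he
  have : 0 ≤ 1 - e ^ 2 := sub_nonneg.2 he_sq
  rw [← sub_nonneg, hdecomp]
  positivity

-- The relation between `w` and `e` makes `-e / 2` a double zero of the cubic in `hdiff`.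
lemma dualPotential_le_of_abs_le_one {w e y : ℝ} (hw : w * (3 - 2 * e ^ 2) = e ^ 2)
    (he : |e| ≤ 1) (hy : e ≤ y) : dualPotential w e ≤ dualPotential w y := by
  obtain ⟨he_neg, he_one⟩ := abs_le.1 he
  have he_sq : e ^ 2 ≤ 1 := (sq_le_one_iff_abs_le_one e).2 he
  have hscale : 0 < 9 * (3 - 2 * e ^ 2) := by linarith
  have hdiff : 9 * (3 - 2 * e ^ 2) * (dualPotential w y - dualPotential w e)
      = (y - e) * (2 * y + e) ^ 2 - 9 * (3 - 2 * e ^ 2) * (y - max (-1) (min y 1)) := by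
    unfold dualPotential
    rw [min_eq_left he_one, max_eq_right he_neg]
    linear_combination (8 / 3 * (y ^ 3 - e ^ 3) - 3 * (y - e)) * hw
  rw [← sub_nonneg, ← mul_nonneg_iff_of_pos_left hscale, hdiff, sub_nonneg]
  rcases le_total y 1 with hy_one | hy_one
  · rw [min_eq_left hy_one, max_eq_right (he_neg.trans hy), sub_self, mul_zero]
    have : 0 ≤ y - e := sub_nonneg.2 hy
    positivity
  · rw [min_eq_right hy_one, max_eq_right (by norm_num)]
    exact mul_sub_one_le_sub_mul_sq he_one he_sq hy_one

lemma dualPotential_one_monotoneOn_Ici_one : MonotoneOn (dualPotential 1) (Ici 1) := by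
  intro x hx y hy hxy
  rw [mem_Ici] at hx hy
  unfold dualPotential
  rw [min_eq_right hx, min_eq_right hy]
  nlinarith [mul_nonneg (sub_nonneg.2 hxy) (by nlinarith : 0 ≤ y ^ 2 + x * y + x ^ 2 - 3)]

lemma dualPotential_one_le_of_one_le {m A B : ℝ} (hm : 1 ≤ m) (hA : A ≤ m) (hB : m ≤ B) :
    dualPotential 1 A ≤ dualPotential 1 B := by
  rcases le_total A 1 with hA_one | hA_one
  · have hleft : dualPotential 1 (-1) ≤ dualPotential 1 (-A) :=
      dualPotential_le_of_abs_le_one (by norm_num) (by norm_num) (neg_le_neg hA_one)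
    have hright : dualPotential 1 1 ≤ dualPotential 1 B :=
      dualPotential_one_monotoneOn_Ici_one self_mem_Ici (hm.trans hB) (hm.trans hB)
    rw [dualPotential_neg, dualPotential_neg] at hleft
    linarith
  · exact dualPotential_one_monotoneOn_Ici_one hA_one (hm.trans hB) (hA.trans hB)

theorem exists_weight_dualPotential_le (m : ℝ) :
    ∃ w ∈ Icc (0 : ℝ) 1, ∀ A ≤ m, ∀ B ≥ m, dualPotential w A ≤ dualPotential w B := by
  rcases le_total |m| 1 with hm | hm
  · have hm_sq : m ^ 2 ≤ 1 := (sq_le_one_iff_abs_le_one m).2 hm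
    have hden : 0 < 3 - 2 * m ^ 2 := by linarith
    refine ⟨m ^ 2 / (3 - 2 * m ^ 2), ⟨by positivity, (div_le_one hden).2 (by linarith)⟩,
      fun A hA B hB => ?_⟩
    have hw := div_mul_cancel₀ (m ^ 2) hden.ne'
    have hleft := dualPotential_le_of_abs_le_one (by rwa [neg_sq]) ((abs_neg m).trans_le hm)
      (neg_le_neg hA)
    have hright := dualPotential_le_of_abs_le_one hw hm hB
    rw [dualPotential_neg, dualPotential_neg] at hleft
    linarith
  · refine ⟨1, ⟨zero_le_one, le_rfl⟩, fun A hA B hB => ?_⟩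
    rcases le_abs.1 hm with hm_pos | hm_neg
    · exact dualPotential_one_le_of_one_le hm_pos hA hB
    · have hreflect := dualPotential_one_le_of_one_le hm_neg (neg_le_neg hB) (neg_le_neg hA)
      rw [dualPotential_neg, dualPotential_neg] at hreflect
      linarith

section DualDensityMoments

variable {P : Measure ℝ}

lemma integrable_dualDensity [IsFiniteMeasure P] (hL2 : MemLp id 2 P) (w : ℝ) :
    Integrable (dualDensity w) P :=
  ((hL2.integrable_sq.const_mul _).sub (integrable_const _)).add
    (integrable_indicator_Ioo_one P (-1) 1)

lemma integral_dualDensity [IsProbabilityMeasure P] (hL2 : MemLp id 2 P) (w : ℝ) :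
    ∫ y, dualDensity w y ∂P
      = (4 + 8 * w) / 9 * ∫ y, y ^ 2 ∂P - w / 3 - P.real {y | 1 ≤ |y|} := by
  have hsq : Integrable (fun y : ℝ => (4 + 8 * w) / 9 * y ^ 2) P := hL2.integrable_sq.const_mul _
  have hpoly : Integrable (fun y : ℝ => (4 + 8 * w) / 9 * y ^ 2 - (1 + w / 3)) P :=
    hsq.sub (integrable_const _)
  have hcompl : {y : ℝ | 1 ≤ |y|} = (Ioo (-1) 1)ᶜ := by
    ext y
    rw [mem_compl_iff, mem_Ioo, ← abs_lt, not_lt, mem_ofPred_eq]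
  unfold dualDensity
  rw [integral_add hpoly (integrable_indicator_Ioo_one P (-1) 1),
    integral_sub hsq (integrable_const _), integral_const_mul,
    integral_indicator_one measurableSet_Ioo, integral_const, probReal_univ, one_smul, hcompl,
    probReal_compl_eq_one_sub measurableSet_Ioo]
  ring

end DualDensityMoments

namespace IsUnimodalWithMode

variable {P : Measure ℝ} [IsProbabilityMeasure P] {m : ℝ}

theorem measureReal_one_le_abs_le (hU : IsUnimodalWithMode P m) (hL2 : MemLp id 2 P) :
    P.real {y | 1 ≤ |y|} ≤ max (4 / 9 * ∫ y, y ^ 2 ∂P) (4 / 3 * ∫ y, y ^ 2 ∂P - 1 / 3) := by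
  obtain ⟨w, ⟨hw_nonneg, hw_one⟩, hpot⟩ := exists_weight_dualPotential_le m
  have hdual : 0 ≤ ∫ y, dualDensity w y ∂P :=
    hU.integral_nonneg (measurable_dualDensity w) (integrable_dualDensity hL2 w)
      (locallyIntegrable_dualDensity w) fun A hA B hB =>
        (sub_nonneg.2 (hpot A hA B hB)).trans
          (dualPotential_sub_le_integral_dualDensity w (hA.trans hB))
  rw [integral_dualDensity hL2] at hdual
  calc P.real {y | 1 ≤ |y|}
      ≤ (1 - w) • (4 / 9 * ∫ y, y ^ 2 ∂P) + w • (4 / 3 * ∫ y, y ^ 2 ∂P - 1 / 3) := by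
        simp only [smul_eq_mul]
        linarith
    _ ≤ max (4 / 9 * ∫ y, y ^ 2 ∂P) (4 / 3 * ∫ y, y ^ 2 ∂P - 1 / 3) :=
        Convex.combo_le_max _ _ (sub_nonneg.2 hw_one) hw_nonneg (sub_add_cancel 1 w)

theorem vysochanskij_petunin (hU : IsUnimodalWithMode P m) (hL2 : MemLp id 2 P) (α : ℝ)
    {r : ℝ} (hr : 0 < r) :
    P.real {x | r ≤ |x - α|} ≤ max (4 / 9 * ((∫ x, (x - α) ^ 2 ∂P) / r ^ 2))
      (4 / 3 * ((∫ x, (x - α) ^ 2 ∂P) / r ^ 2) - 1 / 3) := by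
  have hmeas : Measurable fun x : ℝ => (x - α) / r := by fun_prop
  have hprob : IsProbabilityMeasure (P.map fun x => (x - α) / r) :=
    Measure.isProbabilityMeasure_map hmeas.aemeasurable
  have hL2_map : MemLp id 2 (P.map fun x => (x - α) / r) := by
    rw [memLp_map_measure_iff aestronglyMeasurable_id hmeas.aemeasurable]
    exact (hL2.sub (memLp_const α)).mul_const r⁻¹
  have hmoment : ∫ y, y ^ 2 ∂(P.map fun x => (x - α) / r) = (∫ x, (x - α) ^ 2 ∂P) / r ^ 2 := by
    rw [integral_map hmeas.aemeasurable (by fun_prop), ← integral_div]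
    simp only [div_pow]
  have htail : (P.map fun x => (x - α) / r).real {y | 1 ≤ |y|} = P.real {x | r ≤ |x - α|} := by
    rw [map_measureReal_apply hmeas (measurableSet_le measurable_const (by fun_prop))]
    congr 1
    ext x
    simp only [preimage_ofPred_eq, mem_ofPred_eq, abs_div, abs_of_pos hr, one_le_div hr]
  simpa only [hmoment, htail] using (hU.map_sub_div α hr).measureReal_one_le_abs_le hL2_map

theorem one_sided_vysochanskij_petunin (hU : IsUnimodalWithMode P m) (hL2 : MemLp id 2 P)
    {t : ℝ} (ht : 0 < t) :
    P.real (Ici (∫ x, x ∂P + t)) ≤ max (4 / 9 * (Var[id; P] / (Var[id; P] + t ^ 2)))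
      (4 / 3 * (Var[id; P] / (Var[id; P] + t ^ 2)) - 1 / 3) := by
  set μ := ∫ x, x ∂P
  set V := Var[id; P]
  have hV : 0 ≤ V := variance_nonneg id P
  have hr : 0 < t + V / t := by positivity
  have hsub : Ici (μ + t) ⊆ {x | t + V / t ≤ |x - (μ - V / t)|} := fun x hx => by
    have hx_sub : t + V / t ≤ x - (μ - V / t) := by linarith [mem_Ici.1 hx]
    exact hx_sub.trans (le_abs_self _)
  have hmoment : ∫ x, (x - (μ - V / t)) ^ 2 ∂P = V + (V / t) ^ 2 :=
    (integral_sub_sq_eq_variance_add_sq hL2 _).trans (by simp [μ, V])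
  have hratio : (∫ x, (x - (μ - V / t)) ^ 2 ∂P) / (t + V / t) ^ 2 = V / (V + t ^ 2) := by
    rw [hmoment]
    field_simp
    ring
  rw [← hratio]
  exact (measureReal_mono hsub).trans (hU.vysochanskij_petunin hL2 (μ - V / t) hr)

end IsUnimodalWithMode

theorem one_sided_vysochanskij_petunin_large_general {P : Measure ℝ} [IsProbabilityMeasure P]
    {m : ℝ} (hU : IsUnimodalWithMode P m) (hL2 : MemLp id 2 P) {t : ℝ} (ht : 0 < t)
    (ht_large : 5 / 3 * Var[id; P] ≤ t ^ 2) :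
    P.real (Ici (∫ x, x ∂P + t)) ≤ 4 * Var[id; P] / (9 * (Var[id; P] + t ^ 2)) := by
  have hden : 0 < Var[id; P] + t ^ 2 := by
    have := variance_nonneg id P
    positivity
  have hratio : Var[id; P] / (Var[id; P] + t ^ 2) ≤ 3 / 8 := by
    rw [div_le_iff₀ hden]
    linarith
  have hbound := hU.one_sided_vysochanskij_petunin hL2 ht
  rw [max_eq_left (by linarith)] at hbound
  rwa [← div_mul_div_comm]

/-- **One-sided Vysochanskij–Petunin inequality (large-threshold branch).** If `X` is a real
random variable (given by its law `P`) whose distribution is unimodal with some mode `m`, with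
mean `0` and variance `1`, then for every `k ≥ √(5/3)`, `P[X ≥ k] ≤ 4 / (9 (1 + k²))`. -/
theorem one_sided_vysochanskij_petunin_large
    (P : Measure ℝ) [IsProbabilityMeasure P] (m : ℝ)
    (hU : IsUnimodalWithMode P m)
    (hInt : Integrable (fun x => x ^ 2) P)
    (hmean : (∫ x, x ∂P) = 0) (hvar : (∫ x, x ^ 2 ∂P) = 1)
    (k : ℝ) (hk : Real.sqrt (5 / 3) ≤ k) :
    (P (Set.Ici k)).toReal ≤ 4 / (9 * (1 + k ^ 2)) := by
  have hk_pos : 0 < k := (Real.sqrt_pos.2 (by norm_num)).trans_le hk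
  have hk_sq : 5 / 3 ≤ k ^ 2 := (Real.sqrt_le_left hk_pos.le).1 hk
  have hL2 : MemLp id 2 P := (memLp_two_iff_integrable_sq aestronglyMeasurable_id).2 hInt
  have hvar_id : Var[id; P] = 1 := by simp [variance_eq_sub hL2, hmean, hvar]
  have hbound := one_sided_vysochanskij_petunin_large_general hU hL2 hk_pos
    (by rwa [hvar_id, mul_one])
  rwa [hmean, hvar_id, zero_add, mul_one] at hbound
end

section
/- Let X be a real random variable that is symmetric about 0, whose distribution is unimodal with mode 0, and with E[X²] = 1. Then for every k ≥ 2/√3, the probability that X ≥ k is at most 2/(9k²); and for every k with 0 < k < 2/√3, the probability that X ≥ k is at most 1/2 - k/(2√3). -/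
open MeasureTheory

/-!
Unimodality says that on the half-line `(0, ∞)` the law is a mixture of uniform laws on intervals
`(0, r)`, so an inequality `P[X ≥ k] ≤ ∫_{x > 0} φ dP` with `φ ≥ 0` need only be checked against
those intervals, where it reads `(r - k)⁺ ≤ ∫₀ʳ φ`. For a quadratic `φ` the right-hand side is a
cubic in `r`; choosing it tangent to `r - k` at `r = t` leaves one free parameter `t ≥ 3k/2`. By
symmetry the resulting bound is half of a combination of `1` and `E[X²] = 1`, and it is optimal at
`t = max (√3) (3k/2)`.
-/

open Set ENNReal

section LayerCake

variable {α : Type*} [MeasurableSpace α]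

lemma lintegral_eq_lintegral_measure_ofReal_lt (μ : Measure α) {f : α → ℝ≥0∞}
    (hf : AEMeasurable f μ) :
    ∫⁻ x, f x ∂μ = ∫⁻ s in Ioi (0 : ℝ), μ {x | ENNReal.ofReal s < f x} := by
  by_cases hfin : ∀ᵐ x ∂μ, f x ≠ ∞
  · calc
      ∫⁻ x, f x ∂μ = ∫⁻ x, ENNReal.ofReal (f x).toReal ∂μ :=
        lintegral_congr_ae (hfin.mono fun x hx ↦ (ofReal_toReal hx).symm)
      _ = ∫⁻ s in Ioi (0 : ℝ), μ {x | s < (f x).toReal} :=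
        lintegral_eq_lintegral_meas_lt μ (.of_forall fun _ ↦ toReal_nonneg) hf.ennreal_toReal
      _ = ∫⁻ s in Ioi (0 : ℝ), μ {x | ENNReal.ofReal s < f x} :=
        setLIntegral_congr_fun measurableSet_Ioi fun s hs ↦ measure_congr <|
          hfin.mono fun x hx ↦ propext (ofReal_lt_iff_lt_toReal (le_of_lt hs) hx).symm
  · have htop : μ {x | f x = ∞} ≠ 0 := by simpa [ae_iff] using hfin
    have hle : ∫⁻ _ in Ioi (0 : ℝ), μ {x | f x = ∞} ≤
        ∫⁻ s in Ioi (0 : ℝ), μ {x | ENNReal.ofReal s < f x} :=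
      lintegral_mono fun s ↦ measure_mono fun x (hx : f x = ∞) ↦
        ofReal_lt_top.trans_eq hx.symm
    rw [lintegral_eq_top_of_measure_eq_top_ne_zero hf htop, eq_comm, eq_top_iff]
    simpa [top_mul', mul_top', htop] using hle

end LayerCake

section InitialSegments

variable {α : Type*} [LinearOrder α] [TopologicalSpace α] [OrderTopology α]
  [SecondCountableTopology α] [MeasurableSpace α] {μ ν : Measure α}

lemma measure_le_of_isLowerSet (h : ∀ r, μ (Iic r) ≤ ν (Iic r)) {s : Set α} (hs : IsLowerSet s) :
    μ s ≤ ν s := by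
  rcases s.eq_empty_or_nonempty with rfl | hne
  · simp
  have := hs.ordConnected
  have := hne.to_subtype
  obtain ⟨u, hu_mono, hu_tendsto⟩ := Filter.exists_seq_monotone_tendsto_atTop_atTop s
  have hs_eq : s = ⋃ n, Iic (u n : α) := by
    refine Subset.antisymm (fun x hx ↦ ?_) (iUnion_subset fun n ↦ hs.Iic_subset (u n).2)
    obtain ⟨n, hn⟩ := (hu_tendsto.eventually_ge_atTop ⟨x, hx⟩).exists
    exact mem_iUnion.2 ⟨n, hn⟩
  have hIic_mono : Monotone fun n ↦ Iic (u n : α) := fun _ _ hmn ↦ Iic_subset_Iic.2 (hu_mono hmn)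
  rw [hs_eq, hIic_mono.measure_iUnion, hIic_mono.measure_iUnion]
  exact iSup_mono fun n ↦ h (u n)

lemma lintegral_le_lintegral_of_antitone [BorelSpace α] (h : ∀ r, μ (Iic r) ≤ ν (Iic r))
    {f : α → ℝ≥0∞} (hf : Antitone f) : ∫⁻ x, f x ∂μ ≤ ∫⁻ x, f x ∂ν := by
  rw [lintegral_eq_lintegral_measure_ofReal_lt μ hf.measurable.aemeasurable,
    lintegral_eq_lintegral_measure_ofReal_lt ν hf.measurable.aemeasurable]
  exact lintegral_mono fun s ↦
    measure_le_of_isLowerSet h fun _ _ hyx hx ↦ lt_of_lt_of_le hx (hf hyx)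

end InitialSegments

lemma withDensity_Ici_le_setLIntegral_of_antitoneOn {f φ : ℝ → ℝ≥0∞} {a k : ℝ}
    (hf : AntitoneOn f (Ici a)) (hφ : Measurable φ) (hk : a < k)
    (h : ∀ r, k ≤ r → ENNReal.ofReal (r - k) ≤ ∫⁻ x in Ioc a r, φ x) :
    volume.withDensity f (Ici k) ≤ ∫⁻ x in Ioi a, φ x ∂volume.withDensity f := by
  set g : ℝ → ℝ≥0∞ := fun x ↦ f (max a x)
  have hg : Antitone g := fun x y hxy ↦
    hf (le_max_left a x) (le_max_left a y) (max_le_max_left a hxy)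
  have hfg : EqOn f g (Ioi a) := fun x hx ↦ by
    simp only [g, max_eq_right_of_lt (mem_Ioi.1 hx)]
  have hfm : AEMeasurable f (volume.restrict (Ioi a)) :=
    hg.measurable.aemeasurable.congr <|
      (ae_restrict_mem measurableSet_Ioi).mono fun x hx ↦ (hfg hx).symm
  have hIic (r : ℝ) : volume.restrict (Ici k) (Iic r) ≤
      (volume.restrict (Ioi a)).withDensity φ (Iic r) := by
    rw [Measure.restrict_apply measurableSet_Iic, Iic_inter_Ici, Real.volume_Icc,
      withDensity_apply _ measurableSet_Iic, Measure.restrict_restrict measurableSet_Iic,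
      inter_comm, Ioi_inter_Iic]
    rcases le_total k r with hkr | hrk
    · exact h r hkr
    · exact (ofReal_of_nonpos (sub_nonpos.2 hrk)).trans_le zero_le
  calc
    volume.withDensity f (Ici k) = ∫⁻ x in Ici k, g x := by
      rw [withDensity_apply _ measurableSet_Ici]
      exact setLIntegral_congr_fun measurableSet_Ici (hfg.mono (Ici_subset_Ioi.2 hk))
    _ ≤ ∫⁻ x, g x ∂(volume.restrict (Ioi a)).withDensity φ :=
      lintegral_le_lintegral_of_antitone hIic hg
    _ = ∫⁻ x in Ioi a, φ x * g x := lintegral_withDensity_eq_lintegral_mul _ hφ hg.measurable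
    _ = ∫⁻ x in Ioi a, f x * φ x :=
      setLIntegral_congr_fun measurableSet_Ioi fun x hx ↦ by rw [hfg hx, mul_comm]
    _ = ∫⁻ x in Ioi a, φ x ∂volume.withDensity f := by
      rw [restrict_withDensity measurableSet_Ioi,
        lintegral_withDensity_eq_lintegral_mul₀ hfm hφ.aemeasurable]
      rfl

lemma setIntegral_Ioi_eq_half_of_even {P : Measure ℝ} [NullSingletonClass P]
    (hsymm : P.map (fun x ↦ -x) = P) {g : ℝ → ℝ} (heven : g.Even) (hg : Integrable g P) :
    ∫ x in Ioi 0, g x ∂P = (∫ x, g x ∂P) / 2 := by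
  have hneg : MeasurePreserving (fun x : ℝ ↦ -x) P P := ⟨measurable_neg, hsymm⟩
  have hIio : ∫ x in Iio 0, g x ∂P = ∫ x in Ioi 0, g x ∂P := by
    simpa [heven _] using
      hneg.setIntegral_preimage_emb (MeasurableEquiv.neg ℝ).measurableEmbedding g (Ioi 0)
  have hsplit := integral_add_compl (measurableSet_Ioi (a := (0 : ℝ))) hg
  rw [compl_Ioi, integral_Iic_eq_integral_Iio, hIio] at hsplit
  linarith

/-- The even quadratic `φ` whose primitive `∫₀ʳ φ`, a cubic in `r`, is tangent to the line `r - k`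
at `r = t`. It is the test function of Gauss's inequality for the tail beyond `k`. -/
noncomputable def gaussMajorant (k t x : ℝ) : ℝ :=
  1 - 3 * k / (2 * t) + 3 * k / (2 * t ^ 3) * x ^ 2

namespace gaussMajorant

variable {k t : ℝ}

lemma even (k t : ℝ) : (gaussMajorant k t).Even := fun x ↦ by
  simp only [gaussMajorant, neg_sq]

@[fun_prop]
lemma continuous (k t : ℝ) : Continuous (gaussMajorant k t) := by
  unfold gaussMajorant
  fun_prop

lemma nonneg (hk : 0 ≤ k) (ht : 0 < t) (hkt : 3 * k / 2 ≤ t) (x : ℝ) :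
    0 ≤ gaussMajorant k t x := by
  have hconst : 3 * k / (2 * t) ≤ 1 := (div_le_one (by positivity)).2 (by linarith)
  have hquad : 0 ≤ 3 * k / (2 * t ^ 3) * x ^ 2 := by positivity
  unfold gaussMajorant
  linarith

lemma intervalIntegral_eq (k t r : ℝ) :
    ∫ x in 0..r, gaussMajorant k t x = (1 - 3 * k / (2 * t)) * r + k / (2 * t ^ 3) * r ^ 3 := by
  simp only [gaussMajorant]
  rw [intervalIntegral.integral_add (by simp)
    (Continuous.intervalIntegrable (by fun_prop) _ _), intervalIntegral.integral_const,
    intervalIntegral.integral_const_mul, integral_pow, smul_eq_mul]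
  ring

lemma sub_le_intervalIntegral (hk : 0 ≤ k) (ht : 0 < t) {r : ℝ} (hr : 0 ≤ r) :
    r - k ≤ ∫ x in 0..r, gaussMajorant k t x := by
  have htangent : (∫ x in 0..r, gaussMajorant k t x) - (r - k) =
      k * (r / t - 1) ^ 2 * (r / t + 2) / 2 := by
    rw [intervalIntegral_eq]
    field_simp
    ring
  have hgap : 0 ≤ k * (r / t - 1) ^ 2 * (r / t + 2) / 2 := by positivity
  linarith

lemma ofReal_sub_le_setLIntegral (hk : 0 ≤ k) (ht : 0 < t) (hkt : 3 * k / 2 ≤ t) {r : ℝ}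
    (hr : 0 ≤ r) :
    ENNReal.ofReal (r - k) ≤ ∫⁻ x in Ioc 0 r, ENNReal.ofReal (gaussMajorant k t x) := by
  rw [← ofReal_integral_eq_lintegral_ofReal (continuous k t).integrableOn_Ioc
    (.of_forall (nonneg hk ht hkt)), ← intervalIntegral.integral_of_le hr]
  exact ofReal_le_ofReal (sub_le_intervalIntegral hk ht hr)

lemma integrable {P : Measure ℝ} [IsFiniteMeasure P] (hInt : Integrable (fun x ↦ x ^ 2) P)
    (k t : ℝ) : Integrable (gaussMajorant k t) P :=
  (integrable_const _).add (hInt.const_mul _)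

lemma integral_eq {P : Measure ℝ} [IsProbabilityMeasure P]
    (hInt : Integrable (fun x ↦ x ^ 2) P) (k t : ℝ) :
    ∫ x, gaussMajorant k t x ∂P =
      1 - 3 * k / (2 * t) + 3 * k / (2 * t ^ 3) * ∫ x, x ^ 2 ∂P := by
  simp only [gaussMajorant]
  rw [integral_add (integrable_const _) (hInt.const_mul _), integral_const_mul]
  simp

end gaussMajorant

lemma measureReal_Ici_le_of_symmetric_of_unimodal {P : Measure ℝ} [IsProbabilityMeasure P]
    (hsymm : P.map (fun x ↦ -x) = P) (hU : IsUnimodalWithMode P 0)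
    (hInt : Integrable (fun x ↦ x ^ 2) P) {k t : ℝ} (hk : 0 < k) (hkt : 3 * k / 2 ≤ t) :
    P.real (Ici k) ≤
      (1 - 3 * k / (2 * t) + 3 * k / (2 * t ^ 3) * ∫ x, x ^ 2 ∂P) / 2 := by
  obtain ⟨f, hP, -, hf⟩ := hU
  have ht : 0 < t := by linarith
  have hφ_nonneg := gaussMajorant.nonneg hk.le ht hkt
  have hφ_int := gaussMajorant.integrable hInt k t
  have : NullSingletonClass P := by rw [hP]; infer_instance
  have htail : P (Ici k) ≤ ∫⁻ x in Ioi 0, ENNReal.ofReal (gaussMajorant k t x) ∂P := by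
    rw [hP]
    exact withDensity_Ici_le_setLIntegral_of_antitoneOn hf (by fun_prop) hk fun r hr ↦
      gaussMajorant.ofReal_sub_le_setLIntegral hk.le ht hkt (hk.le.trans hr)
  rw [← gaussMajorant.integral_eq hInt,
    ← setIntegral_Ioi_eq_half_of_even hsymm (gaussMajorant.even k t) hφ_int]
  rw [← ofReal_integral_eq_lintegral_ofReal hφ_int.restrict (.of_forall hφ_nonneg)] at htail
  exact toReal_le_of_le_ofReal (integral_nonneg hφ_nonneg) htail

/-- **One-sided Gauss bound for symmetric unimodal distributions.** If `X` is a real random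
variable (given by its law `P`) symmetric about `0`, unimodal with mode `0`, and `E[X²] = 1`,
then `P[X ≥ k] ≤ 2/(9k²)` for `k ≥ 2/√3`, and `P[X ≥ k] ≤ 1/2 - k/(2√3)` for
`0 < k < 2/√3`. -/
theorem symmetric_unimodal_tail_bound
    (P : Measure ℝ) [IsProbabilityMeasure P]
    (hsymm : P.map (fun x => -x) = P)
    (hU : IsUnimodalWithMode P 0)
    (hInt : Integrable (fun x => x ^ 2) P)
    (hvar : (∫ x, x ^ 2 ∂P) = 1) :
    (∀ k : ℝ, 2 / Real.sqrt 3 ≤ k →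
      (P (Set.Ici k)).toReal ≤ 2 / (9 * k ^ 2)) ∧
    (∀ k : ℝ, 0 < k → k < 2 / Real.sqrt 3 →
      (P (Set.Ici k)).toReal ≤ 1 / 2 - k / (2 * Real.sqrt 3)) := by
  have hs : 0 < √3 := by positivity
  have hs_sq : √3 ^ 2 = 3 := Real.sq_sqrt (by norm_num)
  refine ⟨fun k hk ↦ ?_, fun k hk hk_lt ↦ ?_⟩
  · have hk_pos : 0 < k := lt_of_lt_of_le (by positivity) hk
    calc
      P.real (Ici k) ≤ _ := measureReal_Ici_le_of_symmetric_of_unimodal hsymm hU hInt hk_pos le_rfl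
      _ = 2 / (9 * k ^ 2) := by rw [hvar]; field_simp; norm_num
  · rw [lt_div_iff₀ hs] at hk_lt
    have hkt : 3 * k / 2 ≤ √3 := by nlinarith
    calc
      P.real (Ici k) ≤ _ := measureReal_Ici_le_of_symmetric_of_unimodal hsymm hU hInt hk hkt
      _ = 1 / 2 - k / (2 * √3) := by rw [hvar, pow_succ, hs_sq]; field_simp; ring
end

section
/- For every ε ∈ (0, 1/2), the tightening coefficients of the three distributionally robust reformulations are ordered: f_S⁻¹(1-ε) ≤ f_U⁻¹(1-ε) ≤ f_C⁻¹(1-ε). Explicitly: if 0 < ε ≤ 1/6 then √(2/(9ε)) ≤ √(4/(9ε) - 1) ≤ √((1-ε)/ε), and if 1/6 < ε < 1/2 then √3·(1-2ε) ≤ √(3(1-ε)/(1+3ε)) ≤ √((1-ε)/ε). -/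
/-!
Since `√` is monotone, each inequality reduces to one between radicands, where the differences have
visible signs: `(2 - 9ε) / (9ε)` and `5 / (9ε)` on the first branch, `12ε²(2 - 3ε) / (1 + 3ε)` and
`(1 - ε) / (ε(1 + 3ε))` on the second. The third of these changes sign at `ε = 2/3`, but beyond
`ε = 1/2` the coefficient `√3 (1 - 2ε)` is no longer positive.
-/

section Radicands

variable {K : Type*} [Field K] [LinearOrder K] [IsStrictOrderedRing K] {ε : K}

theorem two_div_nine_mul_le_four_div_nine_mul_sub_one_iff (hε : 0 < ε) :
    2 / (9 * ε) ≤ 4 / (9 * ε) - 1 ↔ ε ≤ 2 / 9 := by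
  have sub_eq : 4 / (9 * ε) - 1 - 2 / (9 * ε) = (2 - 9 * ε) / (9 * ε) := by
    field_simp
    ring
  rw [← sub_nonneg, sub_eq, le_div_iff₀ (by positivity), zero_mul, sub_nonneg,
    le_div_iff₀' (by positivity)]

theorem four_div_nine_mul_sub_one_le_one_sub_div_self (hε : 0 < ε) :
    4 / (9 * ε) - 1 ≤ (1 - ε) / ε := by
  have sub_eq : (1 - ε) / ε - (4 / (9 * ε) - 1) = 5 / (9 * ε) := by
    field_simp
    ring
  rw [← sub_nonneg, sub_eq]
  positivity

theorem three_mul_one_sub_two_mul_sq_le_div (hε : 0 < 1 + 3 * ε) (hε' : ε ≤ 2 / 3) :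
    3 * (1 - 2 * ε) ^ 2 ≤ 3 * (1 - ε) / (1 + 3 * ε) := by
  have sub_eq : 3 * (1 - ε) / (1 + 3 * ε) - 3 * (1 - 2 * ε) ^ 2 =
      12 * ε ^ 2 * (2 - 3 * ε) / (1 + 3 * ε) := by
    field_simp
    ring
  have two_sub_nonneg : 0 ≤ 2 - 3 * ε := by linarith
  rw [← sub_nonneg, sub_eq]
  exact div_nonneg (mul_nonneg (by positivity) two_sub_nonneg) hε.le

theorem three_mul_one_sub_div_le_one_sub_div_self (hε : 0 < ε) (hε' : ε ≤ 1) :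
    3 * (1 - ε) / (1 + 3 * ε) ≤ (1 - ε) / ε := by
  have sub_eq : (1 - ε) / ε - 3 * (1 - ε) / (1 + 3 * ε) = (1 - ε) / (ε * (1 + 3 * ε)) := by
    field_simp
    ring
  rw [← sub_nonneg, sub_eq]
  exact div_nonneg (sub_nonneg.2 hε') (by positivity)

end Radicands

theorem sqrt_three_mul_one_sub_two_mul_le_sqrt_div {ε : ℝ} (hε : 0 < 1 + 3 * ε) :
    √3 * (1 - 2 * ε) ≤ √(3 * (1 - ε) / (1 + 3 * ε)) := by
  rcases le_total ε (2 / 3) with hle | hge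
  · apply Real.le_sqrt_of_sq_le
    rw [mul_pow, Real.sq_sqrt zero_le_three]
    exact three_mul_one_sub_two_mul_sq_le_div hε hle
  · have coeff_nonpos : √3 * (1 - 2 * ε) ≤ 0 :=
      mul_nonpos_of_nonneg_of_nonpos (Real.sqrt_nonneg 3) (by linarith)
    exact coeff_nonpos.trans (Real.sqrt_nonneg _)

theorem tightening_coefficients_ordered_general {ε : ℝ} (hε0 : 0 < ε) (hε1 : ε ≤ 1) :
    (ε ≤ 2 / 9 → √(2 / (9 * ε)) ≤ √(4 / (9 * ε) - 1) ∧ √(4 / (9 * ε) - 1) ≤ √((1 - ε) / ε)) ∧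
    √3 * (1 - 2 * ε) ≤ √(3 * (1 - ε) / (1 + 3 * ε)) ∧
    √(3 * (1 - ε) / (1 + 3 * ε)) ≤ √((1 - ε) / ε) :=
  ⟨fun hε => ⟨Real.sqrt_le_sqrt ((two_div_nine_mul_le_four_div_nine_mul_sub_one_iff hε0).2 hε),
      Real.sqrt_le_sqrt (four_div_nine_mul_sub_one_le_one_sub_div_self hε0)⟩,
    sqrt_three_mul_one_sub_two_mul_le_sqrt_div (by positivity),
    Real.sqrt_le_sqrt (three_mul_one_sub_div_le_one_sub_div_self hε0 hε1)⟩

/-- **Ordering of the tightening coefficients** of the three distributionally robust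
reformulations: for every `ε ∈ (0, 1/2)`, `f_S⁻¹(1-ε) ≤ f_U⁻¹(1-ε) ≤ f_C⁻¹(1-ε)`,
written out explicitly on each branch. -/
theorem tightening_coefficients_ordered (ε : ℝ) (hε0 : 0 < ε) (hε1 : ε < 1 / 2) :
    (ε ≤ 1 / 6 →
      Real.sqrt (2 / (9 * ε)) ≤ Real.sqrt (4 / (9 * ε) - 1) ∧
      Real.sqrt (4 / (9 * ε) - 1) ≤ Real.sqrt ((1 - ε) / ε)) ∧
    (1 / 6 < ε →
      Real.sqrt 3 * (1 - 2 * ε) ≤ Real.sqrt (3 * (1 - ε) / (1 + 3 * ε)) ∧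
      Real.sqrt (3 * (1 - ε) / (1 + 3 * ε)) ≤ Real.sqrt ((1 - ε) / ε)) := by
  obtain ⟨small, large⟩ := tightening_coefficients_ordered_general hε0 (by linarith)
  exact ⟨fun hε => small (by linarith), fun _ => large⟩
end

section
/- Let ε ∈ (0, 1), let δ be any random vector in ℝⁿ with mean vector m and finite covariance matrix Σ, and let a, c ∈ ℝ and b ∈ ℝⁿ. If a + bᵀm + √((1-ε)/ε)·√(bᵀΣb) ≤ c, then the probability that a + bᵀδ ≤ c is at least 1-ε. (Distributionally robust reformulation of a single linear chance constraint given only mean and covariance.) -/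
open MeasureTheory Matrix

/-!
Markov's inequality applied to `(X - 𝔼[X] + u)²`, optimised over the shift `u`, is Cantelli's
inequality `ℙ(X - 𝔼[X] ≥ t) ≤ Var[X] / (Var[X] + t²)`. The coefficient `√((1 - ε) / ε)` is chosen
so that the right-hand side is exactly `ε` at `t = √((1 - ε) / ε) * √Var[X]`. The theorem is the
case `X = bᵀδ`, whose mean is `bᵀm` and whose variance is `bᵀSb`.
-/

open ProbabilityTheory

section Cantelli

variable {Ω : Type*} [MeasurableSpace Ω] {μ : Measure Ω} [IsProbabilityMeasure μ] {X : Ω → ℝ}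

lemma integral_sub_integral_add_sq (hX : MemLp X 2 μ) (u : ℝ) :
    ∫ ω, (X ω - μ[X] + u) ^ 2 ∂μ = Var[X; μ] + u ^ 2 := by
  have hInt : Integrable X μ := hX.integrable one_le_two
  have hCentered : MemLp (fun ω ↦ X ω - μ[X]) 2 μ := hX.sub (memLp_const _)
  have hMean : ∫ ω, (X ω - μ[X] + u) ∂μ = u := by
    rw [integral_add (hCentered.integrable one_le_two) (integrable_const _),
      integral_sub hInt (integrable_const _)]
    simp
  have hVar : Var[fun ω ↦ X ω - μ[X] + u; μ] = Var[X; μ] := by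
    rw [variance_add_const hCentered.aestronglyMeasurable,
      variance_sub_const hX.aestronglyMeasurable]
  have hSecondMoment := variance_eq_sub (hCentered.add (memLp_const u))
  simp only [Pi.add_def, Pi.pow_def, hVar, hMean] at hSecondMoment
  exact sub_eq_iff_eq_add.mp hSecondMoment.symm

lemma measureReal_le_sub_integral_le_add_sq_div (hX : MemLp X 2 μ) {t u : ℝ} (htu : 0 < t + u) :
    μ.real {ω | t ≤ X ω - μ[X]} ≤ (Var[X; μ] + u ^ 2) / (t + u) ^ 2 := by
  have hInt : Integrable (fun ω ↦ (X ω - μ[X] + u) ^ 2) μ :=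
    ((hX.sub (memLp_const _)).add (memLp_const _)).integrable_sq
  have hSubset : {ω | t ≤ X ω - μ[X]} ⊆ {ω | (t + u) ^ 2 ≤ (X ω - μ[X] + u) ^ 2} :=
    fun ω hω ↦ pow_le_pow_left₀ htu.le (add_le_add_left hω u) 2
  rw [le_div_iff₀' (pow_pos htu 2)]
  calc (t + u) ^ 2 * μ.real {ω | t ≤ X ω - μ[X]}
      ≤ (t + u) ^ 2 * μ.real {ω | (t + u) ^ 2 ≤ (X ω - μ[X] + u) ^ 2} :=
        mul_le_mul_of_nonneg_left (measureReal_mono hSubset) (sq_nonneg _)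
    _ ≤ ∫ ω, (X ω - μ[X] + u) ^ 2 ∂μ :=
        mul_meas_ge_le_integral_of_nonneg (.of_forall fun ω ↦ sq_nonneg _) hInt _
    _ = Var[X; μ] + u ^ 2 := integral_sub_integral_add_sq hX u

theorem cantelli_inequality (hX : MemLp X 2 μ) {t : ℝ} (ht : 0 < t) :
    μ.real {ω | t ≤ X ω - μ[X]} ≤ Var[X; μ] / (Var[X; μ] + t ^ 2) := by
  have hVar : 0 ≤ Var[X; μ] := variance_nonneg X μ
  -- `u = Var[X; μ] / t` minimises `(Var[X; μ] + u ^ 2) / (t + u) ^ 2`.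
  calc μ.real {ω | t ≤ X ω - μ[X]}
      ≤ (Var[X; μ] + (Var[X; μ] / t) ^ 2) / (t + Var[X; μ] / t) ^ 2 :=
        measureReal_le_sub_integral_le_add_sq_div hX (by positivity)
    _ = Var[X; μ] / (Var[X; μ] + t ^ 2) := by
        field_simp
        ring

lemma measureReal_sqrt_mul_sqrt_variance_lt_sub_integral_le (hX : MemLp X 2 μ) {ε : ℝ}
    (hε0 : 0 < ε) (hε1 : ε < 1) :
    μ.real {ω | √((1 - ε) / ε) * √Var[X; μ] < X ω - μ[X]} ≤ ε := by
  have hRatio : 0 < (1 - ε) / ε := div_pos (sub_pos.mpr hε1) hε0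
  rcases (variance_nonneg X μ).eq_or_lt' with hVar | hVar
  · have hNull : μ {ω | √((1 - ε) / ε) * √Var[X; μ] < X ω - μ[X]} = 0 := by
      rw [measure_eq_zero_iff_ae_notMem]
      filter_upwards [ae_eq_integral_of_variance_eq_zero hX hVar] with ω hω
      simp [hVar, hω]
    simpa [measureReal_def, hNull] using hε0.le
  · have hSq : (√((1 - ε) / ε) * √Var[X; μ]) ^ 2 = (1 - ε) / ε * Var[X; μ] := by
      rw [mul_pow, Real.sq_sqrt hRatio.le, Real.sq_sqrt hVar.le]
    calc μ.real {ω | √((1 - ε) / ε) * √Var[X; μ] < X ω - μ[X]}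
        ≤ μ.real {ω | √((1 - ε) / ε) * √Var[X; μ] ≤ X ω - μ[X]} :=
          measureReal_mono (Set.ofPred_subset_ofPred.mpr fun ω ↦ le_of_lt)
      _ ≤ Var[X; μ] / (Var[X; μ] + (√((1 - ε) / ε) * √Var[X; μ]) ^ 2) :=
          cantelli_inequality hX (by positivity)
      _ = ε := by
          rw [hSq]
          field_simp
          ring

theorem one_sub_le_measureReal_le_of_integral_add_sqrt_mul_le (hX : MemLp X 2 μ)
    {ε c : ℝ} (hε0 : 0 < ε) (hε1 : ε < 1) (h : μ[X] + √((1 - ε) / ε) * √Var[X; μ] ≤ c) :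
    1 - ε ≤ μ.real {ω | X ω ≤ c} := by
  have hMeas : NullMeasurableSet {ω | X ω ≤ c} μ :=
    nullMeasurableSet_le hX.aemeasurable aemeasurable_const
  have hSubset : {ω | X ω ≤ c}ᶜ ⊆ {ω | √((1 - ε) / ε) * √Var[X; μ] < X ω - μ[X]} :=
    fun ω hω ↦ lt_sub_iff_add_lt'.mpr (h.trans_lt (not_le.mp hω))
  have hViolation : μ.real {ω | X ω ≤ c}ᶜ ≤ ε :=
    (measureReal_mono hSubset).trans
      (measureReal_sqrt_mul_sqrt_variance_lt_sub_integral_le hX hε0 hε1)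
  rw [probReal_compl_eq_one_sub₀ hMeas] at hViolation
  linarith

end Cantelli

section LinearCombination

variable {Ω ι : Type*} [MeasurableSpace Ω] [Fintype ι] {μ : Measure Ω} {δ : ι → Ω → ℝ}

lemma integral_sum_const_mul (hδ : ∀ i, Integrable (δ i) μ) (b : ι → ℝ) :
    ∫ ω, ∑ i, b i * δ i ω ∂μ = ∑ i, b i * μ[δ i] := by
  rw [integral_finsetSum _ fun i _ ↦ (hδ i).const_mul (b i)]
  simp only [integral_const_mul]

lemma variance_sum_const_mul [IsFiniteMeasure μ] (hδ : ∀ i, MemLp (δ i) 2 μ) (b : ι → ℝ) :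
    Var[fun ω ↦ ∑ i, b i * δ i ω; μ] = b ⬝ᵥ (of fun i j ↦ cov[δ i, δ j; μ]) *ᵥ b := by
  rw [variance_fun_sum fun i ↦ (hδ i).const_mul (b i)]
  simp only [dotProduct, mulVec, of_apply, Finset.mul_sum]
  refine Finset.sum_congr rfl fun i _ ↦ Finset.sum_congr rfl fun j _ ↦ ?_
  rw [covariance_const_mul_left, covariance_const_mul_right, mul_comm (b j)]

theorem distributionally_robust_linear_chance_constraint_general [IsProbabilityMeasure μ]
    (hδ : ∀ i, MemLp (δ i) 2 μ) (a c : ℝ) (b : ι → ℝ) {ε : ℝ} (hε0 : 0 < ε) (hε1 : ε < 1)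
    (h : a + ∑ i, b i * μ[δ i] +
      √((1 - ε) / ε) * √(b ⬝ᵥ (of fun i j ↦ cov[δ i, δ j; μ]) *ᵥ b) ≤ c) :
    1 - ε ≤ μ.real {ω | a + ∑ i, b i * δ i ω ≤ c} := by
  have hLinear : MemLp (fun ω ↦ ∑ i, b i * δ i ω) 2 μ :=
    memLp_finsetSum _ fun i _ ↦ (hδ i).const_mul (b i)
  simp only [← le_sub_iff_add_le']
  apply one_sub_le_measureReal_le_of_integral_add_sqrt_mul_le hLinear hε0 hε1
  rw [integral_sum_const_mul (fun i ↦ (hδ i).integrable one_le_two), variance_sum_const_mul hδ]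
  linarith

end LinearCombination

/-- **Distributionally robust reformulation of a single linear chance constraint given only
mean and covariance.** If `δ` is any random vector in `ℝⁿ` (given by its law `P`) with mean
vector `m` and (finite) covariance matrix `S`, and
`a + bᵀm + √((1-ε)/ε) √(bᵀSb) ≤ c`, then `P[a + bᵀδ ≤ c] ≥ 1 - ε`. -/
theorem distributionally_robust_linear_chance_constraint
    {n : ℕ} (P : Measure (Fin n → ℝ)) [IsProbabilityMeasure P]
    (hInt : ∀ i, Integrable (fun x => x i ^ 2) P)
    (m : Fin n → ℝ) (S : Matrix (Fin n) (Fin n) ℝ)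
    (hm : ∀ i, m i = ∫ x, x i ∂P)
    (hS : ∀ i j, S i j = ∫ x, (x i - m i) * (x j - m j) ∂P)
    (a c : ℝ) (b : Fin n → ℝ) (ε : ℝ) (hε0 : 0 < ε) (hε1 : ε < 1)
    (h : a + (∑ i, b i * m i) + Real.sqrt ((1 - ε) / ε) * Real.sqrt (b ⬝ᵥ S.mulVec b) ≤ c) :
    1 - ε ≤ (P {x | a + ∑ i, b i * x i ≤ c}).toReal := by
  obtain rfl : m = fun i ↦ ∫ x, x i ∂P := funext hm
  obtain rfl : S = of fun i j ↦ cov[fun x ↦ x i, fun x ↦ x j; P] := Matrix.ext hS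
  exact distributionally_robust_linear_chance_constraint_general (fun i ↦
    (memLp_two_iff_integrable_sq (measurable_pi_apply i).aestronglyMeasurable).mpr (hInt i))
    a c b hε0 hε1 h
end

section
/- Let ε ∈ (0, 1), let m, c ∈ ℝ and s > 0. If m + √((1-ε)/ε)·s > c, then there exists a real random variable X with mean m and variance s² such that the probability that X ≤ c is strictly less than 1-ε. (The Cantelli-based distributionally robust reformulation is necessary as well as sufficient: no smaller uncertainty margin guarantees the chance constraint for all distributions with the given mean and variance.) -/
open MeasureTheory

/-!
Put mass `p` at `m + √((1-p)/p) s` and mass `1 - p` at `m - √(p/(1-p)) s`. This law has mean `m`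
and variance `s²`, and it attains equality in Cantelli's inequality at its upper atom. For `p = ε`
one only gets `P[X ≤ c] ≤ 1 - ε`. Since the upper atom depends continuously on `p`, it stays above
`c` for some `p` slightly larger than `ε`, and then `P[X ≤ c] ≤ 1 - p < 1 - ε`.
-/

open ProbabilityTheory Set
open scoped unitInterval

/-- The Cantelli tightening coefficient `f_C⁻¹(1 - p)`, where `p` is the allowed probability of
violating the chance constraint. It takes the junk value `0` at `p = 0`. -/
noncomputable def cantelliCoeff (p : ℝ) : ℝ := √((1 - p) / p)

lemma mul_cantelliCoeff {p : ℝ} (hp : 0 ≤ p) : p * cantelliCoeff p = √(p * (1 - p)) := by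
  obtain rfl | hp := hp.eq_or_lt
  · simp
  · calc p * √((1 - p) / p) = √(p ^ 2 * ((1 - p) / p)) := by
          rw [Real.sqrt_mul (sq_nonneg p), Real.sqrt_sq hp.le]
      _ = √(p * (1 - p)) := by congr 1; field_simp

lemma mul_cantelliCoeff_sq {p : ℝ} (hp₀ : 0 < p) (hp₁ : p ≤ 1) :
    p * cantelliCoeff p ^ 2 = 1 - p := by
  rw [cantelliCoeff, Real.sq_sqrt (div_nonneg (sub_nonneg.2 hp₁) hp₀.le), mul_div_cancel₀ _ hp₀.ne']

lemma one_sub_mul_cantelliCoeff_one_sub (p : I) :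
    (1 - p : ℝ) * cantelliCoeff (1 - p) = p * cantelliCoeff p := by
  rw [mul_cantelliCoeff p.2.1, mul_cantelliCoeff (sub_nonneg.2 p.2.2), sub_sub_cancel, mul_comm]

lemma continuousAt_cantelliCoeff {p : ℝ} (hp : p ≠ 0) : ContinuousAt cantelliCoeff p :=
  ((continuousAt_const.sub continuousAt_id).div continuousAt_id hp).sqrt

lemma exists_mem_Ioo_lt_add_cantelliCoeff_mul {ε b c m s : ℝ} (hε : ε ≠ 0) (hεb : ε < b)
    (h : c < m + cantelliCoeff ε * s) : ∃ p ∈ Ioo ε b, c < m + cantelliCoeff p * s := by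
  have hcont : ContinuousAt (fun p ↦ m + cantelliCoeff p * s) ε :=
    continuousAt_const.add ((continuousAt_cantelliCoeff hε).mul_const s)
  have hnear : ∀ᶠ p in nhdsWithin ε (Ioi ε), c < m + cantelliCoeff p * s :=
    (hcont.eventually_const_lt h).filter_mono nhdsWithin_le_nhds
  exact (Filter.Eventually.and (Ioo_mem_nhdsGT hεb) hnear).exists

/-- The two-point law with mean `m` and standard deviation `s` that is extremal in Cantelli's
inequality: its upper atom has mass `p`. The lower atom is `m - √(p/(1-p)) s`, because
`cantelliCoeff (1 - p) = √(p/(1-p))`. For `p = 0` or `p = 1` it degenerates to the Dirac mass at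
`m`. -/
noncomputable def cantelliLaw (m s : ℝ) (p : I) : Measure ℝ :=
  bernoulliMeasure (m + cantelliCoeff p * s) (m - cantelliCoeff (1 - p) * s) p

instance (m s : ℝ) (p : I) : IsProbabilityMeasure (cantelliLaw m s p) := by
  unfold cantelliLaw
  infer_instance

lemma integrable_cantelliLaw {E : Type*} [NormedAddCommGroup E] (m s : ℝ) (p : I) (f : ℝ → E) :
    Integrable f (cantelliLaw m s p) :=
  integrable_bernoulliMeasure _ _ p f

lemma integral_id_cantelliLaw (m s : ℝ) (p : I) : ∫ x, x ∂cantelliLaw m s p = m := by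
  rw [cantelliLaw, integral_bernoulliMeasure, smul_eq_mul, smul_eq_mul]
  linear_combination -s * one_sub_mul_cantelliCoeff_one_sub p

lemma integral_sub_sq_cantelliLaw (m s : ℝ) {p : I} (hp₀ : 0 < p) (hp₁ : p < 1) :
    ∫ x, (x - m) ^ 2 ∂cantelliLaw m s p = s ^ 2 := by
  have hupper : (p : ℝ) * cantelliCoeff p ^ 2 = 1 - p := mul_cantelliCoeff_sq hp₀ hp₁.le
  have hlower : (1 - p : ℝ) * cantelliCoeff (1 - p) ^ 2 = 1 - (1 - p) :=
    mul_cantelliCoeff_sq (sub_pos.2 hp₁) (sub_le_self 1 p.2.1)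
  rw [cantelliLaw, integral_bernoulliMeasure, smul_eq_mul, smul_eq_mul]
  linear_combination s ^ 2 * (hupper + hlower)

lemma bernoulliMeasure_real_le_of_notMem {X : Type*} [MeasurableSpace X] {x : X} (y : X) (p : I)
    {A : Set X} (hA : MeasurableSet A) (hx : x ∉ A) :
    (bernoulliMeasure x y p).real A ≤ 1 - p := by
  by_cases hy : y ∈ A
  · exact (bernoulliMeasure_real_apply_of_notMem_of_mem p hA hx hy).le
  · exact (bernoulliMeasure_real_apply_of_notMem_of_notMem p hA hx hy).trans_le
      (sub_nonneg.2 p.2.2)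

lemma cantelliLaw_real_Iic_le {m s c : ℝ} {p : I} (hc : c < m + cantelliCoeff p * s) :
    (cantelliLaw m s p).real (Iic c) ≤ 1 - p :=
  bernoulliMeasure_real_le_of_notMem _ p measurableSet_Iic hc.not_ge

/-- **Necessity of the Cantelli-based reformulation.** If `m + √((1-ε)/ε) s > c` with `s > 0`
and `ε ∈ (0,1)`, then there is a real random variable (given by its law `P`) with mean `m` and
variance `s²` such that `P[X ≤ c] < 1 - ε`. -/
theorem cantelli_reformulation_necessary
    (ε m c s : ℝ) (hε0 : 0 < ε) (hε1 : ε < 1) (hs : 0 < s)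
    (h : c < m + Real.sqrt ((1 - ε) / ε) * s) :
    ∃ P : Measure ℝ, IsProbabilityMeasure P ∧
      Integrable (fun x => x ^ 2) P ∧
      (∫ x, x ∂P) = m ∧ (∫ x, (x - m) ^ 2 ∂P) = s ^ 2 ∧
      (P (Set.Iic c)).toReal < 1 - ε := by
  obtain ⟨p, ⟨hεp, hp₁⟩, hcp⟩ := exists_mem_Ioo_lt_add_cantelliCoeff_mul hε0.ne' hε1 h
  have hp₀ : 0 < p := hε0.trans hεp
  let q : I := ⟨p, hp₀.le, hp₁.le⟩
  have htail : (cantelliLaw m s q).real (Iic c) < 1 - ε :=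
    (cantelliLaw_real_Iic_le hcp).trans_lt (sub_lt_sub_left hεp 1)
  exact ⟨cantelliLaw m s q, inferInstance, integrable_cantelliLaw m s q _,
    integral_id_cantelliLaw m s q, integral_sub_sq_cantelliLaw m s hp₀ hp₁, htail⟩
end

section
/- For every k ≥ √(5/3) and every η > 0 there exists a real random variable X whose distribution is unimodal with some mode m, with mean 0 and variance 1, such that the probability that X ≥ k exceeds 4/(9(1+k²)) - η. (Hence the supremum of P[X ≥ k] over standardized unimodal distributions equals 4/(9(1+k²)) for k ≥ √(5/3).) -/
open MeasureTheory

/-!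
Mix a narrow uniform law centred at the mode `-a` with a long uniform spike on `[-a, L - a]` of
weight `2a / L`. That weight makes the mean `0`, and the width of the centred part is then adjusted
to make the variance `1`, which is possible as long as `2aL < 3(1 + a²)`. At the forbidden endpoint
the centred part degenerates to an atom; there the tail of the spike beyond `k` equals
`4 / (9(1 + k²))` for `a = 1/k`, so the bound is approached as `L` increases to `3(k + 1/k) / 2`.
The weight is less than `1` as long as `√3 k > 1`; for smaller `k` the uniform law on `[-√3, √3]`
already has a large enough tail.
-/

open Filter ProbabilityTheory Set Topology unitInterval

lemma measurable_of_monotoneOn_Iic_of_antitoneOn_Ici {α β : Type*} [LinearOrder α]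
    [TopologicalSpace α] [OrderTopology α] [SecondCountableTopology α] [MeasurableSpace α]
    [BorelSpace α] [LinearOrder β] [TopologicalSpace β] [OrderTopology β]
    [SecondCountableTopology β] [MeasurableSpace β] [BorelSpace β] {f : α → β} {m : α}
    (hmono : MonotoneOn f (Iic m)) (hanti : AntitoneOn f (Ici m)) : Measurable f := by
  refine measurable_of_Ioi fun c => OrdConnected.measurableSet ⟨fun x hx y hy z hz => ?_⟩
  rcases le_total z m with hzm | hmz
  · exact lt_of_lt_of_le hx (hmono (hz.1.trans hzm) hzm hz.1)
  · exact lt_of_lt_of_le hy (hanti hmz (hmz.trans hz.2) hz.2)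

section Unimodal

variable {P Q : Measure ℝ} {m : ℝ}

lemma IsUnimodalWithMode.add (hP : IsUnimodalWithMode P m) (hQ : IsUnimodalWithMode Q m) :
    IsUnimodalWithMode (P + Q) m := by
  obtain ⟨f, rfl, hf_mono, hf_anti⟩ := hP
  obtain ⟨g, rfl, hg_mono, hg_anti⟩ := hQ
  have hf := measurable_of_monotoneOn_Iic_of_antitoneOn_Ici hf_mono hf_anti
  exact ⟨f + g, (withDensity_add_left hf g).symm, hf_mono.add hg_mono, hf_anti.add hg_anti⟩

lemma IsUnimodalWithMode.smul (hP : IsUnimodalWithMode P m) (c : ENNReal) :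
    IsUnimodalWithMode (c • P) m := by
  obtain ⟨f, rfl, hmono, hanti⟩ := hP
  have hf := measurable_of_monotoneOn_Iic_of_antitoneOn_Ici hmono hanti
  exact ⟨c • f, (withDensity_smul c hf).symm,
    fun _ hx _ hy hxy => mul_le_mul_right (hmono hx hy hxy) c,
    fun _ hx _ hy hxy => mul_le_mul_right (hanti hx hy hxy) c⟩

lemma isUnimodalWithMode_restrict {s : Set ℝ} (hs : s.OrdConnected) (hm : m ∈ s) :
    IsUnimodalWithMode (volume.restrict s) m := by
  refine ⟨s.indicator 1, (withDensity_indicator_one hs.measurableSet).symm, ?_, ?_⟩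
  · intro x _ y hy hxy
    refine indicator_apply_le' (fun hx => ?_) fun _ => zero_le
    rw [indicator_of_mem (hs.out hx hm ⟨hxy, hy⟩), Pi.one_apply, Pi.one_apply]
  · intro x hx y _ hxy
    refine indicator_apply_le' (fun hy => ?_) fun _ => zero_le
    rw [indicator_of_mem (hs.out hm hy ⟨hx, hxy⟩), Pi.one_apply, Pi.one_apply]

lemma isUnimodalWithMode_cond {s : Set ℝ} (hs : s.OrdConnected) (hm : m ∈ s) :
    IsUnimodalWithMode volume[|s] m :=
  (isUnimodalWithMode_restrict hs hm).smul _

end Unimodal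

section UniformIcc

variable {a b : ℝ}

lemma isProbabilityMeasure_cond_Icc (hab : a < b) : IsProbabilityMeasure volume[|Icc a b] :=
  cond_isProbabilityMeasure_of_finite (by simpa using hab) (by simp)

lemma integrable_cond_Icc {f : ℝ → ℝ} (hab : a < b) (hf : Continuous f) :
    Integrable f volume[|Icc a b] :=
  hf.continuousOn.integrableOn_Icc.integrable.smul_measure (by simpa using hab)

lemma integral_cond_Icc (hab : a < b) (f : ℝ → ℝ) :
    ∫ x, f x ∂volume[|Icc a b] = (∫ x in a..b, f x) / (b - a) := by
  rw [ProbabilityTheory.cond, ← setAverage_eq', setAverage_eq, Real.volume_real_Icc_of_le hab.le,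
    integral_Icc_eq_integral_Ioc, ← intervalIntegral.integral_of_le hab.le, smul_eq_mul,
    inv_mul_eq_div]

lemma integral_id_cond_Icc (hab : a < b) : ∫ x, x ∂volume[|Icc a b] = (a + b) / 2 := by
  have hba : b - a ≠ 0 := (sub_pos.2 hab).ne'
  rw [integral_cond_Icc hab, integral_id]
  field_simp
  ring

lemma integral_sq_cond_Icc (hab : a < b) :
    ∫ x, x ^ 2 ∂volume[|Icc a b] = (a ^ 2 + a * b + b ^ 2) / 3 := by
  have hba : b - a ≠ 0 := (sub_pos.2 hab).ne'
  rw [integral_cond_Icc hab, integral_pow]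
  field_simp
  ring

lemma measureReal_cond_Icc_Ici {k : ℝ} (hk : k ∈ Icc a b) :
    volume[|Icc a b].real (Ici k) = (b - k) / (b - a) := by
  have hinter : Icc a b ∩ Ici k = Icc k b := by
    rw [← Ici_inter_Iic, inter_right_comm, Ici_inter_Ici, sup_eq_right.2 hk.1, Ici_inter_Iic]
  rw [measureReal_def, cond_apply measurableSet_Icc, hinter, ENNReal.toReal_mul,
    ENNReal.toReal_inv, ← measureReal_def, ← measureReal_def, Real.volume_real_Icc_of_le hk.2,
    Real.volume_real_Icc_of_le (hk.1.trans hk.2), inv_mul_eq_div]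

end UniformIcc

/-- The law `P` has mean `0` and variance `1`. Square integrability is part of the definition, so
that neither integral takes the junk value of a divergent one. -/
structure IsStandardized (P : Measure ℝ) : Prop where
  isProbabilityMeasure : IsProbabilityMeasure P
  integrable_sq : Integrable (fun x => x ^ 2) P
  integral_id : ∫ x, x ∂P = 0
  integral_sq : ∫ x, x ^ 2 ∂P = 1

section SymmetricUniform

variable {k : ℝ}

lemma isStandardized_cond_Icc_sqrt_three : IsStandardized volume[|Icc (-√3) √3] := by
  have hlt : -√3 < √3 := neg_lt_self (by positivity)
  refine ⟨isProbabilityMeasure_cond_Icc hlt, integrable_cond_Icc hlt (by fun_prop), ?_, ?_⟩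
  · rw [integral_id_cond_Icc hlt]
    ring
  · rw [integral_sq_cond_Icc hlt]
    linear_combination Real.sq_sqrt (show (0 : ℝ) ≤ 3 by norm_num) / 3

-- After clearing denominators the difference of the two sides is `√3 (1 - √3 k) ^ 3`.
lemma four_div_le_sqrt_three_sub_div (hk : √3 * k ≤ 1) :
    4 / (9 * (1 + k ^ 2)) ≤ (√3 - k) / (√3 - -√3) := by
  have hsq : √3 ^ 2 = 3 := Real.sq_sqrt (by norm_num)
  have hcube : 0 ≤ √3 * (1 - √3 * k) ^ 3 :=
    mul_nonneg (by positivity) (pow_nonneg (sub_nonneg.2 hk) 3)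
  have hexpand : √3 * (1 - √3 * k) ^ 3 = (√3 - k) * (9 * (1 + k ^ 2)) - 8 * √3 := by
    linear_combination (-3 * k + 3 * √3 * k ^ 2 - k ^ 3 * (√3 ^ 2 + 3)) * hsq
  rw [sub_neg_eq_add, div_le_div_iff₀ (by positivity) (by positivity)]
  linarith

lemma le_measureReal_cond_Icc_sqrt_three_Ici (hk : √3 * k ≤ 1) :
    4 / (9 * (1 + k ^ 2)) ≤ volume[|Icc (-√3) √3].real (Ici k) := by
  have hmax : √3 * max k 0 ≤ 1 := by
    rcases max_choice k 0 with h | h <;> simp [h, hk]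
  have hmem : max k 0 ∈ Icc (-√3) √3 := by
    have hsq : √3 ^ 2 = 3 := Real.sq_sqrt (by norm_num)
    have hpos : 0 < √3 := by positivity
    exact ⟨by linarith [le_max_right k 0], by nlinarith⟩
  have := isStandardized_cond_Icc_sqrt_three.isProbabilityMeasure
  calc 4 / (9 * (1 + k ^ 2)) ≤ 4 / (9 * (1 + max k 0 ^ 2)) := by
        have : max k 0 ^ 2 ≤ k ^ 2 := by
          rcases max_choice k 0 with h | h <;> simp [h, sq_nonneg]
        gcongr
    _ ≤ (√3 - max k 0) / (√3 - -√3) := four_div_le_sqrt_three_sub_div hmax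
    _ = volume[|Icc (-√3) √3].real (Ici (max k 0)) := (measureReal_cond_Icc_Ici hmem).symm
    _ ≤ volume[|Icc (-√3) √3].real (Ici k) :=
        measureReal_mono (Ici_subset_Ici.2 (le_max_left k 0))

end SymmetricUniform

section SpikedUniform

/-- The mixture of the uniform law on `[m, m + L]`, with weight `p`, and the uniform law on
`[m - ε, m + ε]`, with weight `1 - p`. -/
noncomputable def spikedUniform (m ε L : ℝ) (p : I) : Measure ℝ :=
  toNNReal p • volume[|Icc m (m + L)] + toNNReal (σ p) • volume[|Icc (m - ε) (m + ε)]

variable {m ε L : ℝ} {p : I}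

lemma isProbabilityMeasure_spikedUniform (hε : 0 < ε) (hL : 0 < L) :
    IsProbabilityMeasure (spikedUniform m ε L p) := by
  have := isProbabilityMeasure_cond_Icc (lt_add_of_pos_right m hL)
  have := isProbabilityMeasure_cond_Icc (show m - ε < m + ε by linarith)
  unfold spikedUniform
  infer_instance

lemma isUnimodalWithMode_spikedUniform (hε : 0 ≤ ε) (hL : 0 ≤ L) :
    IsUnimodalWithMode (spikedUniform m ε L p) m := by
  have hspike : m ∈ Icc m (m + L) := ⟨le_rfl, by linarith⟩
  have hcentre : m ∈ Icc (m - ε) (m + ε) := ⟨by linarith, by linarith⟩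
  exact ((isUnimodalWithMode_cond ordConnected_Icc hspike).smul _).add
    ((isUnimodalWithMode_cond ordConnected_Icc hcentre).smul _)

lemma integrable_spikedUniform {f : ℝ → ℝ} (hε : 0 < ε) (hL : 0 < L) (hf : Continuous f) :
    Integrable f (spikedUniform m ε L p) :=
  ((integrable_cond_Icc (lt_add_of_pos_right m hL) hf).smul_measure_nnreal).add_measure
    ((integrable_cond_Icc (by linarith) hf).smul_measure_nnreal)

lemma integral_spikedUniform {f : ℝ → ℝ} (hε : 0 < ε) (hL : 0 < L) (hf : Continuous f) :
    ∫ x, f x ∂spikedUniform m ε L p =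
      p * ∫ x, f x ∂volume[|Icc m (m + L)] +
        (1 - p) * ∫ x, f x ∂volume[|Icc (m - ε) (m + ε)] := by
  rw [spikedUniform, integral_add_measure
    (integrable_cond_Icc (lt_add_of_pos_right m hL) hf).smul_measure_nnreal
    (integrable_cond_Icc (by linarith) hf).smul_measure_nnreal,
    integral_smul_nnreal_measure, integral_smul_nnreal_measure]
  rfl

lemma integral_id_spikedUniform (hε : 0 < ε) (hL : 0 < L) :
    ∫ x, x ∂spikedUniform m ε L p = m + p * L / 2 := by
  rw [integral_spikedUniform hε hL continuous_id', integral_id_cond_Icc (by linarith),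
    integral_id_cond_Icc (by linarith)]
  ring

lemma integral_sq_spikedUniform (hε : 0 < ε) (hL : 0 < L) :
    ∫ x, x ^ 2 ∂spikedUniform m ε L p =
      m ^ 2 + p * (m * L + L ^ 2 / 3) + (1 - p) * (ε ^ 2 / 3) := by
  rw [integral_spikedUniform hε hL (by fun_prop), integral_sq_cond_Icc (by linarith),
    integral_sq_cond_Icc (by linarith)]
  ring

lemma le_measureReal_spikedUniform_Ici {k : ℝ} (hk : k ∈ Icc m (m + L)) :
    p * ((m + L - k) / L) ≤ (spikedUniform m ε L p).real (Ici k) := by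
  have htail : volume[|Icc m (m + L)].real (Ici k) = (m + L - k) / L := by
    rw [measureReal_cond_Icc_Ici hk, add_sub_cancel_left]
  rw [spikedUniform, measureReal_add_apply, measureReal_nnreal_smul_apply,
    measureReal_nnreal_smul_apply, htail, coe_toNNReal]
  exact le_add_of_nonneg_right (by positivity)

end SpikedUniform

section Extremal

variable {k : ℝ}

lemma exists_isStandardized_isUnimodalWithMode_le_tail {a L : ℝ} (ha : 0 ≤ a) (haL : 2 * a < L)
    (hvar : 2 * a * L < 3 * (1 + a ^ 2)) :
    ∃ P : Measure ℝ, IsStandardized P ∧ IsUnimodalWithMode P (-a) ∧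
      ∀ k ∈ Icc (-a) (-a + L), 2 * a * (L - a - k) / L ^ 2 ≤ P.real (Ici k) := by
  have hL : 0 < L := by linarith
  have hp : 2 * a / L < 1 := (div_lt_one hL).2 haL
  let p : I := ⟨2 * a / L, by positivity, hp.le⟩
  have hpL : (p : ℝ) * L = 2 * a := div_mul_cancel₀ _ hL.ne'
  have hq : 0 < 1 - (p : ℝ) := sub_pos.2 hp
  obtain ⟨ε, hε, hε_sq⟩ : ∃ ε : ℝ, 0 < ε ∧ (1 - p) * ε ^ 2 = 3 * (1 + a ^ 2) - 2 * a * L := by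
    have hpos : 0 < (3 * (1 + a ^ 2) - 2 * a * L) / (1 - p) := div_pos (sub_pos.2 hvar) hq
    exact ⟨√_, Real.sqrt_pos.2 hpos, by rw [Real.sq_sqrt hpos.le, mul_div_cancel₀ _ hq.ne']⟩
  refine ⟨spikedUniform (-a) ε L p,
    ⟨isProbabilityMeasure_spikedUniform hε hL,
      integrable_spikedUniform hε hL (by fun_prop), ?_, ?_⟩,
    isUnimodalWithMode_spikedUniform hε.le hL.le, fun k hk => ?_⟩
  · rw [integral_id_spikedUniform hε hL]
    linear_combination hpL / 2
  · rw [integral_sq_spikedUniform hε hL]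
    linear_combination (-a + L / 3) * hpL + hε_sq / 3
  · convert le_measureReal_spikedUniform_Ici hk using 1
    simp only [p]
    field_simp
    ring

lemma tendsto_spike_tail (hk : 0 < k) :
    Tendsto (fun L : ℝ => 2 * k⁻¹ * (L - k⁻¹ - k) / L ^ 2) (𝓝 (3 / 2 * (k + k⁻¹)))
      (𝓝 (4 / (9 * (1 + k ^ 2)))) := by
  have hcont : ContinuousAt (fun L : ℝ => 2 * k⁻¹ * (L - k⁻¹ - k) / L ^ 2)
      (3 / 2 * (k + k⁻¹)) :=
    ContinuousAt.div (by fun_prop) (by fun_prop) (by positivity)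
  convert hcont.tendsto using 2
  field_simp
  ring

lemma exists_spike_length_tail_gt (hk : 0 < k) (hk3 : 1 < 3 * k ^ 2) {c : ℝ}
    (hc : c < 4 / (9 * (1 + k ^ 2))) :
    ∃ L : ℝ, 2 * k⁻¹ < L ∧ k + k⁻¹ < L ∧ L < 3 / 2 * (k + k⁻¹) ∧
      c < 2 * k⁻¹ * (L - k⁻¹ - k) / L ^ 2 := by
  have hweight : 2 * k⁻¹ < 3 / 2 * (k + k⁻¹) := by
    field_simp
    linarith
  have hreach : k + k⁻¹ < 3 / 2 * (k + k⁻¹) := by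
    have : 0 < k + k⁻¹ := by positivity
    linarith
  have hnear := ((lt_mem_nhds hweight).and <| (lt_mem_nhds hreach).and <|
    (tendsto_spike_tail hk).eventually_const_lt hc).filter_mono
      (nhdsWithin_le_nhds (s := Iio (3 / 2 * (k + k⁻¹))))
  obtain ⟨L, ⟨hL_weight, hL_reach, hL_tail⟩, hL_lt⟩ := (hnear.and self_mem_nhdsWithin).exists
  exact ⟨L, hL_weight, hL_reach, hL_lt, hL_tail⟩

lemma exists_isStandardized_isUnimodalWithMode_tail_gt (hk : 1 < √3 * k) {c : ℝ}
    (hc : c < 4 / (9 * (1 + k ^ 2))) :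
    ∃ (P : Measure ℝ) (m : ℝ), IsStandardized P ∧ IsUnimodalWithMode P m ∧
      c < P.real (Ici k) := by
  have hk0 : 0 < k := pos_of_mul_pos_right (one_pos.trans hk) (Real.sqrt_nonneg 3)
  have hk3 : 1 < 3 * k ^ 2 := by
    have : 1 < (√3 * k) ^ 2 := one_lt_pow₀ hk two_ne_zero
    rwa [mul_pow, Real.sq_sqrt (by norm_num)] at this
  obtain ⟨L, hweight, hreach, hL, htail⟩ := exists_spike_length_tail_gt hk0 hk3 hc
  have hvar : 2 * k⁻¹ * L < 3 * (1 + k⁻¹ ^ 2) :=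
    calc 2 * k⁻¹ * L < 2 * k⁻¹ * (3 / 2 * (k + k⁻¹)) := by gcongr
      _ = 3 * (1 + k⁻¹ ^ 2) := by field_simp
  obtain ⟨P, hP, hmode, hP_tail⟩ :=
    exists_isStandardized_isUnimodalWithMode_le_tail (by positivity) hweight hvar
  have hk_mem : k ∈ Icc (-k⁻¹) (-k⁻¹ + L) :=
    ⟨by linarith [inv_pos.2 hk0], by linarith⟩
  exact ⟨P, -k⁻¹, hP, hmode, htail.trans_le (hP_tail k hk_mem)⟩

end Extremal

theorem one_sided_vysochanskij_petunin_sharp_general (k η : ℝ) (hη : 0 < η) :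
    ∃ (P : Measure ℝ) (m : ℝ), IsProbabilityMeasure P ∧
      IsUnimodalWithMode P m ∧
      Integrable (fun x => x ^ 2) P ∧
      (∫ x, x ∂P) = 0 ∧ (∫ x, x ^ 2 ∂P) = 1 ∧
      4 / (9 * (1 + k ^ 2)) - η < (P (Set.Ici k)).toReal := by
  obtain ⟨P, m, hP, hmode, htail⟩ : ∃ (P : Measure ℝ) (m : ℝ), IsStandardized P ∧
      IsUnimodalWithMode P m ∧ 4 / (9 * (1 + k ^ 2)) - η < P.real (Ici k) := by
    rcases le_or_gt (√3 * k) 1 with hk | hk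
    · exact ⟨volume[|Icc (-√3) √3], 0, isStandardized_cond_Icc_sqrt_three,
        isUnimodalWithMode_cond ordConnected_Icc (by simp),
        (sub_lt_self _ hη).trans_le (le_measureReal_cond_Icc_sqrt_three_Ici hk)⟩
    · exact exists_isStandardized_isUnimodalWithMode_tail_gt hk (sub_lt_self _ hη)
  exact ⟨P, m, hP.isProbabilityMeasure, hmode, hP.integrable_sq, hP.integral_id, hP.integral_sq,
    htail⟩

/-- **Sharpness of the one-sided Vysochanskij–Petunin inequality.** For every `k ≥ √(5/3)` and
`η > 0` there is a real random variable (given by its law `P`) unimodal with some mode `m`,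
with mean `0` and variance `1`, such that `P[X ≥ k] > 4/(9(1+k²)) - η`. -/
theorem one_sided_vysochanskij_petunin_sharp
    (k : ℝ) (hk : Real.sqrt (5 / 3) ≤ k) (η : ℝ) (hη : 0 < η) :
    ∃ (P : Measure ℝ) (m : ℝ), IsProbabilityMeasure P ∧
      IsUnimodalWithMode P m ∧
      Integrable (fun x => x ^ 2) P ∧
      (∫ x, x ∂P) = 0 ∧ (∫ x, x ^ 2 ∂P) = 1 ∧
      4 / (9 * (1 + k ^ 2)) - η < (P (Set.Ici k)).toReal :=
  one_sided_vysochanskij_petunin_sharp_general k η hη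
end
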